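/- For φ ∈ BMO(ℝ^n), the condition φ ∈ VMO(ℝ^n) is equivalent to lim_{t→0} ‖φ - φ(·,t)‖_* = 0, where φ(x,t) = (P_t * φ)(x) is the Poisson extension of φ. -/

import Mathlib

open MeasureTheory Real Set Filter

/-- Open axis-parallel cube with corner `c` and side length `l`. -/
def cube {n : ℕ} (c : EuclideanSpace ℝ (Fin n)) (l : ℝ) : Set (EuclideanSpace ℝ (Fin n)) :=
  {x | ∀ i, x i ∈ Set.Ioo (c i) (c i + l)}

/-- Mean of `f` over the cube with corner `c` and side length `l`. -/
noncomputable def cubeAvg {n : ℕ} (f : EuclideanSpace ℝ (Fin n) → ℝ)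
    (c : EuclideanSpace ℝ (Fin n)) (l : ℝ) : ℝ :=
  (∫ x in cube c l, f x) / l ^ n

/-- Mean oscillation of `f` over the cube with corner `c` and side length `l`. -/
noncomputable def cubeOsc {n : ℕ} (f : EuclideanSpace ℝ (Fin n) → ℝ)
    (c : EuclideanSpace ℝ (Fin n)) (l : ℝ) : ℝ :=
  (∫ x in cube c l, |f x - cubeAvg f c l|) / l ^ n

/-- `f ∈ BMO(ℝⁿ)`. -/
def IsBMO {n : ℕ} (f : EuclideanSpace ℝ (Fin n) → ℝ) : Prop :=
  LocallyIntegrable f ∧ ∃ C, ∀ c l, 0 < l → cubeOsc f c l ≤ C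

/-- `f ∈ VMO(ℝⁿ)`. -/
def IsVMO {n : ℕ} (f : EuclideanSpace ℝ (Fin n) → ℝ) : Prop :=
  IsBMO f ∧ ∀ ε > (0 : ℝ), ∃ δ > (0 : ℝ), ∀ c l, 0 < l → l ≤ δ → cubeOsc f c l ≤ ε

/-- The `BMO` seminorm `‖f‖_*`. -/
noncomputable def bmoNorm {n : ℕ} (f : EuclideanSpace ℝ (Fin n) → ℝ) : ℝ :=
  sInf {C : ℝ | 0 ≤ C ∧ ∀ c l, 0 < l → cubeOsc f c l ≤ C}

/-- Poisson kernel of the upper half-space `ℝⁿ × (0,∞)`: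
`P_t(x) = c_n t / (t² + |x|²)^((n+1)/2)` with `c_n = Γ((n+1)/2)/π^((n+1)/2)`. -/
noncomputable def poissonHK (n : ℕ) (t : ℝ) (x : EuclideanSpace ℝ (Fin n)) : ℝ :=
  (Real.Gamma (((n : ℝ) + 1) / 2) / Real.pi ^ (((n : ℝ) + 1) / 2)) * t /
    (t ^ 2 + ‖x‖ ^ 2) ^ (((n : ℝ) + 1) / 2)

/-- Poisson extension `φ(x, t) = (P_t * φ)(x)`. -/
noncomputable def poissonExt {n : ℕ} (φ : EuclideanSpace ℝ (Fin n) → ℝ)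
    (x : EuclideanSpace ℝ (Fin n)) (t : ℝ) : ℝ :=
  ∫ y, poissonHK n t (x - y) * φ y

/-!
The mean oscillation of `f` over a cube is, up to a factor `2`, the mean of `|f x - f z|` over
independent uniform points `x`, `z` of the cube. In this form it is subadditive in `f` and
invariant under translations, and it passes through averages, so that
`φ(x) - φ(x, t) = ∫ P_t(y) (φ(x) - φ(x + y)) dy` gives
`‖φ - φ(·, t)‖_* ≤ ∫ P_t(y) ‖φ - τ_y φ‖_* dy`, where `τ_y φ = φ(· + y)`.

If `φ ∈ VMO`, then `‖φ - τ_y φ‖_* → 0` as `y → 0`: cubes smaller than `|y|` have small oscillation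
already, and the mean of `|φ - τ_y φ|` over a larger cube is controlled by its means over cubes of
side `|y|`, which are small. As `P_t` is an approximate identity and `‖φ - τ_y φ‖_* ≤ 2 ‖φ‖_*`, the
integral above tends to `0`.

Conversely, each `φ(·, t)` is uniformly continuous: `|P_t(u) - P_t(v)|` is a small multiple of
`P_t(u)` once `|u - v|` is small, and the means of `φ` over concentric dyadic cubes grow linearly in
the generation, which `P_t` integrates. The oscillation of `φ` over small cubes is at most that of
`φ(·, t)` plus `‖φ - φ(·, t)‖_*`.
-/

section

open scoped ENNReal Topology ProbabilityTheory

section MeanDistance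

variable {α β F : Type*} [MeasurableSpace α] [MeasurableSpace β]

/-- The mean distance between the values of `f` at a `μ`-random and an independent `ν`-random
point. For a probability measure `μ`, the diagonal case `meanDist f μ μ` is the mean oscillation
of `f`, up to a factor `2` and without reference to the mean of `f`. -/
noncomputable def meanDist [EDist F] (f : α → F) (μ ν : Measure α) : ℝ≥0∞ :=
  ∫⁻ x, ∫⁻ z, edist (f x) (f z) ∂ν ∂μ

section EMetric

variable [PseudoEMetricSpace F] {f g h : α → F} {μ ν ρ : Measure α}

lemma meanDist_le_mul_of_le_smul {c : ℝ≥0∞} (h : μ ≤ c • ν) :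
    meanDist f μ ρ ≤ c * meanDist f ν ρ :=
  (lintegral_mono' h le_rfl).trans_eq (lintegral_smul_measure c _)

lemma meanDist_self_le_two_mul_lintegral [MeasurableSpace F] [OpensMeasurableSpace F]
    [IsProbabilityMeasure μ] (hf : Measurable f) (a : F) :
    meanDist f μ μ ≤ 2 * ∫⁻ x, edist (f x) a ∂μ :=
  calc meanDist f μ μ
      ≤ ∫⁻ x, ∫⁻ z, (edist (f x) a + edist (f z) a) ∂μ ∂μ := by
        unfold meanDist
        gcongr
        exact edist_triangle_right _ _ _
    _ = 2 * ∫⁻ x, edist (f x) a ∂μ := by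
        simp_rw [lintegral_add_left measurable_const, lintegral_const, measure_univ, mul_one]
        rw [lintegral_add_left (by fun_prop), lintegral_const, measure_univ, mul_one, two_mul]

variable [MeasurableSpace F] [OpensMeasurableSpace F] [SecondCountableTopology F]

lemma meanDist_comm [SFinite μ] [SFinite ν] (hf : Measurable f) :
    meanDist f μ ν = meanDist f ν μ := by
  unfold meanDist
  rw [lintegral_lintegral_swap (Measurable.aemeasurable (by fun_prop))]
  simp_rw [edist_comm]

lemma meanDist_triangle [IsProbabilityMeasure μ] [IsProbabilityMeasure ν] [IsProbabilityMeasure ρ]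
    (hf : Measurable f) : meanDist f μ ρ ≤ meanDist f μ ν + meanDist f ν ρ :=
  calc ∫⁻ x, ∫⁻ z, edist (f x) (f z) ∂ρ ∂μ
      = ∫⁻ x, ∫⁻ z, ∫⁻ _w, edist (f x) (f z) ∂ν ∂ρ ∂μ := by simp
    _ ≤ ∫⁻ x, ∫⁻ z, ∫⁻ w, (edist (f x) (f w) + edist (f w) (f z)) ∂ν ∂ρ ∂μ := by
      gcongr
      exact edist_triangle _ _ _
    _ = meanDist f μ ν + meanDist f ρ ν := by
      have hint (x z : α) : ∫⁻ w, (edist (f x) (f w) + edist (f w) (f z)) ∂ν =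
          ∫⁻ w, edist (f x) (f w) ∂ν + ∫⁻ w, edist (f z) (f w) ∂ν := by
        rw [lintegral_add_left (by fun_prop)]
        simp_rw [edist_comm (f z)]
      simp_rw [hint, lintegral_add_left measurable_const, lintegral_const, measure_univ, mul_one]
      rw [lintegral_add_left (by fun_prop), lintegral_const, measure_univ, mul_one]
      rfl
    _ = meanDist f μ ν + meanDist f ν ρ := by rw [meanDist_comm (μ := ρ) hf]

lemma lintegral_edist_comp_le [IsProbabilityMeasure ν] (hf : Measurable f) {T : α → α}
    (hT : Measurable T) :
    ∫⁻ x, edist (f x) (f (T x)) ∂μ ≤ meanDist f μ ν + meanDist f (μ.map T) ν :=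
  calc ∫⁻ x, edist (f x) (f (T x)) ∂μ
      = ∫⁻ x, ∫⁻ _z, edist (f x) (f (T x)) ∂ν ∂μ := by simp
    _ ≤ ∫⁻ x, ∫⁻ z, (edist (f x) (f z) + edist (f (T x)) (f z)) ∂ν ∂μ := by
      gcongr
      exact edist_triangle_right _ _ _
    _ = meanDist f μ ν + meanDist f (μ.map T) ν := by
      simp_rw [meanDist]
      rw [lintegral_map (by fun_prop) hT, ← lintegral_add_left (by fun_prop)]
      exact lintegral_congr fun x => lintegral_add_left (by fun_prop) _

lemma meanDist_map {T : β → α} {μ ν : Measure β} [SFinite ν] (hf : Measurable f)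
    (hT : Measurable T) :
    meanDist f (μ.map T) (ν.map T) = meanDist (f ∘ T) μ ν := by
  unfold meanDist
  rw [lintegral_map (by fun_prop) hT]
  exact lintegral_congr fun x => lintegral_map (by fun_prop) hT

lemma meanDist_le_add [SFinite ν] (hg : Measurable g)
    (hfgh : ∀ x z, edist (f x) (f z) ≤ edist (g x) (g z) + edist (h x) (h z)) :
    meanDist f μ ν ≤ meanDist g μ ν + meanDist h μ ν :=
  calc meanDist f μ ν
      ≤ ∫⁻ x, ((∫⁻ z, edist (g x) (g z) ∂ν) + ∫⁻ z, edist (h x) (h z) ∂ν) ∂μ := by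
        refine lintegral_mono fun x => ?_
        rw [← lintegral_add_left (by fun_prop)]
        exact lintegral_mono fun z => hfgh x z
    _ = _ := lintegral_add_left (by fun_prop) _

end EMetric

section Normed

variable [NormedAddCommGroup F] {f : α → F} {μ : Measure α}

lemma integrable_of_meanDist_ne_top [MeasurableSpace F] [BorelSpace F]
    [SecondCountableTopology F] [IsProbabilityMeasure μ] (hf : Measurable f)
    (h : meanDist f μ μ ≠ ∞) : Integrable f μ := by
  obtain ⟨x, hx⟩ := exists_le_lintegral (μ := μ) (f := fun x => ∫⁻ z, edist (f x) (f z) ∂μ)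
    (Measurable.aemeasurable (by fun_prop))
  have hsub : Integrable (fun z => f x - f z) μ := by
    refine ⟨(measurable_const.sub hf).aestronglyMeasurable, ?_⟩
    simp_rw [hasFiniteIntegral_iff_enorm, ← edist_eq_enorm_sub]
    exact hx.trans_lt h.lt_top
  exact ((integrable_const (f x)).sub hsub).congr (.of_forall fun z => sub_sub_cancel (f x) (f z))

variable [NormedSpace ℝ F]

lemma meanDist_const_smul (a : ℝ) (f : α → F) (μ ν : Measure α) :
    meanDist (fun x => a • f x) μ ν = ‖a‖ₑ * meanDist f μ ν := by
  simp_rw [meanDist, edist_smul₀, ENNReal.smul_def, smul_eq_mul]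
  simp_rw [lintegral_const_mul' _ _ ENNReal.coe_ne_top]
  rfl

lemma lintegral_edist_integral_le_meanDist [IsProbabilityMeasure μ] [CompleteSpace F]
    (hf : Integrable f μ) : ∫⁻ x, edist (f x) (∫ z, f z ∂μ) ∂μ ≤ meanDist f μ μ := by
  refine lintegral_mono fun x => ?_
  calc edist (f x) (∫ z, f z ∂μ) = edist (∫ _z, f x ∂μ) (∫ z, f z ∂μ) := by simp
    _ ≤ ∫⁻ z, edist (f x) (f z) ∂μ := edist_integral_le_lintegral_edist (integrable_const _) hf

variable [MeasurableSpace F] [OpensMeasurableSpace F] [SecondCountableTopology F]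

lemma meanDist_integral_le {ν : Measure α} {κ : Measure β} [SFinite μ] [SFinite ν] [SFinite κ]
    {G : α → β → F} (hG : Measurable (Function.uncurry G)) (hint : ∀ x, Integrable (G x) κ) :
    meanDist (fun x => ∫ y, G x y ∂κ) μ ν ≤ ∫⁻ y, meanDist (G · y) μ ν ∂κ :=
  calc meanDist (fun x => ∫ y, G x y ∂κ) μ ν
      ≤ ∫⁻ x, ∫⁻ z, ∫⁻ y, edist (G x y) (G z y) ∂κ ∂ν ∂μ := by
        unfold meanDist
        gcongr with x z
        exact edist_integral_le_lintegral_edist (hint x) (hint z)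
    _ = ∫⁻ x, ∫⁻ y, ∫⁻ z, edist (G x y) (G z y) ∂ν ∂κ ∂μ := by
        congr! 2 with x
        exact lintegral_lintegral_swap (Measurable.aemeasurable (by fun_prop))
    _ = ∫⁻ y, meanDist (G · y) μ ν ∂κ :=
        lintegral_lintegral_swap (Measurable.aemeasurable (by fun_prop))

end Normed

end MeanDistance

variable {n : ℕ}

local notation "𝔼" n:max => EuclideanSpace ℝ (Fin n)

section Cubes

variable {c c' x : 𝔼 n} {l l' h r : ℝ}

lemma cube_eq_preimage (c : 𝔼 n) (l : ℝ) :
    cube c l = WithLp.ofLp ⁻¹' univ.pi fun i => Ioo (c i) (c i + l) := by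
  ext x
  simp [cube]

lemma measurableSet_cube (c : 𝔼 n) (l : ℝ) : MeasurableSet (cube c l) := by
  rw [cube_eq_preimage]
  exact (PiLp.volume_preserving_ofLp (Fin n)).measurable
    (MeasurableSet.univ_pi fun _ => measurableSet_Ioo)

lemma volume_cube (c : 𝔼 n) (hl : 0 ≤ l) : volume (cube c l) = ENNReal.ofReal (l ^ n) := by
  rw [cube_eq_preimage, (PiLp.volume_preserving_ofLp (Fin n)).measure_preimage
    (MeasurableSet.univ_pi fun _ => measurableSet_Ioo).nullMeasurableSet, Real.volume_pi_Ioo]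
  simp [ENNReal.ofReal_pow hl]

lemma cube_subset_cube (h : ∀ i, c' i ≤ c i ∧ c i + l ≤ c' i + l') : cube c l ⊆ cube c' l' :=
  fun _ hx i => Ioo_subset_Ioo (h i).1 (h i).2 (hx i)

lemma norm_le_of_forall_abs_le (hx : ∀ i, |x i| ≤ r) : ‖x‖ ≤ n * r := by
  have hsum : (∑ i, EuclideanSpace.single i (x i)) = x := by
    ext j
    simp [Pi.single_apply]
  calc ‖x‖ = ‖∑ i, EuclideanSpace.single i (x i)‖ := by rw [hsum]
    _ ≤ ∑ i : Fin n, |x i| := (norm_sum_le _ _).trans_eq (by simp)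
    _ ≤ ∑ _i : Fin n, r := Finset.sum_le_sum fun i _ => hx i
    _ = n * r := by simp

lemma cube_subset_closedBall (c : 𝔼 n) (l : ℝ) : cube c l ⊆ Metric.closedBall c (n * l) := by
  intro x hx
  rw [mem_closedBall_iff_norm]
  refine norm_le_of_forall_abs_le fun i => ?_
  obtain ⟨hlo, hhi⟩ := hx i
  rw [PiLp.sub_apply, abs_le]
  constructor <;> linarith

/-- The vector `c - (r, …, r)`: the cube with this corner and side length `2 * r` is the cube with
centre `c` and half-side `r`. -/
noncomputable def lowerCorner (c : 𝔼 n) (r : ℝ) : 𝔼 n := WithLp.toLp 2 fun i => c i - r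

lemma mem_cube_lowerCorner : x ∈ cube (lowerCorner c r) (2 * r) ↔ ∀ i, |x i - c i| < r := by
  refine forall_congr' fun i => ?_
  rw [abs_sub_lt_iff, mem_Ioo, lowerCorner]
  constructor <;> rintro ⟨_, _⟩ <;> constructor <;> linarith

/-- The uniform probability measure on a cube, so that `cubeAvg f c l` is the integral of `f`
against `cubeMeasure c l`. -/
noncomputable def cubeMeasure (c : 𝔼 n) (l : ℝ) : Measure (𝔼 n) := volume[|cube c l]

lemma isProbabilityMeasure_cubeMeasure (c : 𝔼 n) (hl : 0 < l) :
    IsProbabilityMeasure (cubeMeasure c l) := by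
  refine ProbabilityTheory.cond_isProbabilityMeasure_of_finite ?_ ?_ <;>
    simp [volume_cube c hl.le, hl]

instance isFiniteMeasure_cubeMeasure (c : 𝔼 n) (l : ℝ) : IsFiniteMeasure (cubeMeasure c l) := by
  unfold cubeMeasure
  infer_instance

lemma ae_mem_cube (c : 𝔼 n) (l : ℝ) : ∀ᵐ x ∂cubeMeasure c l, x ∈ cube c l :=
  ProbabilityTheory.ae_cond_mem (measurableSet_cube c l)

lemma restrict_cube_eq_smul (c : 𝔼 n) (hl : 0 < l) :
    volume.restrict (cube c l) = ENNReal.ofReal (l ^ n) • cubeMeasure c l := by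
  have hvol : ENNReal.ofReal (l ^ n) ≠ 0 := by simp [hl]
  rw [cubeMeasure, ProbabilityTheory.cond, volume_cube c hl.le, smul_smul,
    ENNReal.mul_inv_cancel hvol ENNReal.ofReal_ne_top, one_smul]

lemma cubeMeasure_le_smul {k : ℕ} [NeZero k] (hl : 0 < l) (hk : l' = k * l)
    (h : cube c l ⊆ cube c' l') :
    cubeMeasure c l ≤ (k : ℝ≥0∞) ^ n • cubeMeasure c' l' := by
  have hvol : volume (cube c' l') = k ^ n * volume (cube c l) := by
    rw [volume_cube c hl.le, volume_cube c' (by rw [hk]; positivity), hk, mul_pow,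
      ENNReal.ofReal_mul (by positivity), ENNReal.ofReal_pow (by positivity),
      ENNReal.ofReal_natCast]
  have hinv : (k : ℝ≥0∞) ^ n * (volume (cube c' l'))⁻¹ = (volume (cube c l))⁻¹ := by
    have hk0 : (k : ℝ≥0∞) ^ n ≠ 0 := pow_ne_zero n (NeZero.ne _)
    have hkt : (k : ℝ≥0∞) ^ n ≠ ∞ := by simp
    rw [hvol, ENNReal.mul_inv (.inl hk0) (.inl hkt), ← mul_assoc, ENNReal.mul_inv_cancel hk0 hkt,
      one_mul]
  rw [cubeMeasure, cubeMeasure, ProbabilityTheory.cond, ProbabilityTheory.cond, smul_smul, hinv]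
  gcongr

lemma map_add_right_cubeMeasure (c v : 𝔼 n) (l : ℝ) :
    (cubeMeasure c l).map (· + v) = cubeMeasure (c + v) l := by
  have hpre : (· + v) ⁻¹' cube (c + v) l = cube c l := by
    ext x
    simp [cube, add_right_comm]
  have hmp := (measurePreserving_add_right volume v).restrict_preimage
    (measurableSet_cube (c + v) l)
  rw [hpre] at hmp
  have hvol : volume (cube (c + v) l) = volume (cube c l) := by
    rw [← hpre, measure_preimage_add_right]
  rw [cubeMeasure, cubeMeasure, ProbabilityTheory.cond, ProbabilityTheory.cond, Measure.map_smul,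
    hmp.map_eq, hvol]

lemma lintegral_comp_add_right_cubeMeasure {g : 𝔼 n → ℝ≥0∞} (hg : Measurable g) (c v : 𝔼 n)
    (l : ℝ) : ∫⁻ x, g (x + v) ∂cubeMeasure c l = ∫⁻ x, g x ∂cubeMeasure (c + v) l := by
  rw [← map_add_right_cubeMeasure, lintegral_map hg (by fun_prop)]

lemma integral_cubeMeasure {F : Type*} [NormedAddCommGroup F] [NormedSpace ℝ F] (f : 𝔼 n → F)
    (c : 𝔼 n) (hl : 0 < l) :
    ∫ x, f x ∂cubeMeasure c l = (l ^ n)⁻¹ • ∫ x in cube c l, f x := by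
  rw [cubeMeasure, ProbabilityTheory.cond, integral_smul_measure, volume_cube c hl.le,
    ENNReal.toReal_inv, ENNReal.toReal_ofReal (by positivity)]

lemma cubeAvg_eq_integral (f : 𝔼 n → ℝ) (c : 𝔼 n) (hl : 0 < l) :
    cubeAvg f c l = ∫ x, f x ∂cubeMeasure c l := by
  rw [integral_cubeMeasure f c hl, smul_eq_mul, cubeAvg, inv_mul_eq_div]

lemma cubeOsc_eq_integral (f : 𝔼 n → ℝ) (c : 𝔼 n) (hl : 0 < l) :
    cubeOsc f c l = ∫ x, |f x - ∫ z, f z ∂cubeMeasure c l| ∂cubeMeasure c l := by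
  rw [integral_cubeMeasure _ c hl, smul_eq_mul, ← cubeAvg_eq_integral f c hl, cubeOsc,
    inv_mul_eq_div]

lemma lintegral_cubeMeasure_le_lintegral_comp_add {g : 𝔼 n → ℝ≥0∞} (hg : Measurable g)
    (hh : 0 < h) (hl : h ≤ l) (c : 𝔼 n) {v : 𝔼 n} (hv : v ∈ cube 0 h) :
    ∫⁻ x, g x ∂cubeMeasure c l ≤
      2 ^ n * ∫⁻ x, g (x + v) ∂cubeMeasure (lowerCorner c h) (2 * l) := by
  have hsub : cube (c - v) l ⊆ cube (lowerCorner c h) (2 * l) := cube_subset_cube fun i => by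
    obtain ⟨hv₀, hvh⟩ := hv i
    simp only [PiLp.zero_apply, zero_add] at hv₀ hvh
    simp only [lowerCorner, PiLp.sub_apply]
    constructor <;> linarith
  calc ∫⁻ x, g x ∂cubeMeasure c l
      = ∫⁻ x, g (x + v) ∂cubeMeasure (c - v) l := by
        rw [lintegral_comp_add_right_cubeMeasure hg, sub_add_cancel]
    _ ≤ 2 ^ n * ∫⁻ x, g (x + v) ∂cubeMeasure (lowerCorner c h) (2 * l) := by
        have hle := cubeMeasure_le_smul (k := 2) (by linarith) (by norm_num) hsub
        exact (lintegral_mono' hle le_rfl).trans_eq (lintegral_smul_measure _ _)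

-- Averaging over a random translation `v ∈ cube 0 h` replaces tiling the large cube by small ones.
lemma lintegral_cubeMeasure_le_of_le {g : 𝔼 n → ℝ≥0∞} (hg : Measurable g) (hh : 0 < h)
    (hl : h ≤ l) {S : ℝ≥0∞} (hS : ∀ c, ∫⁻ x, g x ∂cubeMeasure c h ≤ S) (c : 𝔼 n) :
    ∫⁻ x, g x ∂cubeMeasure c l ≤ 2 ^ n * S := by
  set κ : Measure (𝔼 n) := cubeMeasure 0 h
  set ν : Measure (𝔼 n) := cubeMeasure (lowerCorner c h) (2 * l)
  have : IsProbabilityMeasure κ := isProbabilityMeasure_cubeMeasure 0 hh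
  have : IsProbabilityMeasure ν := isProbabilityMeasure_cubeMeasure _ (by linarith)
  calc ∫⁻ x, g x ∂cubeMeasure c l
      = ∫⁻ _v, (∫⁻ x, g x ∂cubeMeasure c l) ∂κ := by simp
    _ ≤ ∫⁻ v, 2 ^ n * ∫⁻ x, g (x + v) ∂ν ∂κ :=
        lintegral_mono_ae ((ae_mem_cube 0 h).mono fun v hv =>
          lintegral_cubeMeasure_le_lintegral_comp_add hg hh hl c hv)
    _ = 2 ^ n * ∫⁻ x, ∫⁻ v, g (x + v) ∂κ ∂ν := by
        rw [lintegral_const_mul' _ _ (by simp), lintegral_lintegral_swap]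
        exact Measurable.aemeasurable (by fun_prop)
    _ = 2 ^ n * ∫⁻ x, ∫⁻ v, g v ∂cubeMeasure x h ∂ν := by
        congr! 3 with x
        simp_rw [add_comm x]
        rw [lintegral_comp_add_right_cubeMeasure hg, zero_add]
    _ ≤ 2 ^ n * ∫⁻ _x, S ∂ν := by
        gcongr with x
        exact hS x
    _ = 2 ^ n * S := by simp

end Cubes

section MeanOscillation

variable {f g : 𝔼 n → ℝ} {c : 𝔼 n} {l δ : ℝ}

/-- The mean oscillation of `f` over a cube as the mean distance between the values of `f` at two
independent uniform points of the cube; for `f` measurable and integrable on the cube it lies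
between `cubeOsc f c l` and `2 * cubeOsc f c l`. -/
noncomputable def doubleOsc (f : 𝔼 n → ℝ) (c : 𝔼 n) (l : ℝ) : ℝ≥0∞ :=
  meanDist f (cubeMeasure c l) (cubeMeasure c l)

/-- The `BMO` seminorm in terms of `doubleOsc`; it is `∞` at measurable functions outside `BMO`. -/
noncomputable def eBMONorm (f : 𝔼 n → ℝ) : ℝ≥0∞ :=
  ⨆ (c) (l) (_ : 0 < l), doubleOsc f c l

/-- The largest mean oscillation of `f` over cubes of side length at most `δ`. In `BMO`, the space
`VMO` is cut out by the convergence of `oscModulus f δ` to `0` as `δ → 0`. -/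
noncomputable def oscModulus (f : 𝔼 n → ℝ) (δ : ℝ) : ℝ≥0∞ :=
  ⨆ (c) (l) (_ : 0 < l) (_ : l ≤ δ), doubleOsc f c l

lemma doubleOsc_le_eBMONorm (f : 𝔼 n → ℝ) (c : 𝔼 n) (hl : 0 < l) :
    doubleOsc f c l ≤ eBMONorm f :=
  le_iSup_of_le c <| le_iSup₂_of_le l hl le_rfl

lemma doubleOsc_le_oscModulus (f : 𝔼 n → ℝ) (c : 𝔼 n) (hl : 0 < l) (hδ : l ≤ δ) :
    doubleOsc f c l ≤ oscModulus f δ :=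
  le_iSup_of_le c <| le_iSup_of_le l <| le_iSup₂_of_le hl hδ le_rfl

lemma oscModulus_le_eBMONorm (f : 𝔼 n → ℝ) (δ : ℝ) : oscModulus f δ ≤ eBMONorm f :=
  iSup_le fun c => iSup_le fun _ => iSup₂_le fun hl _ => doubleOsc_le_eBMONorm f c hl

lemma oscModulus_mono (f : 𝔼 n → ℝ) : Monotone (oscModulus f) := fun _ _ hδ =>
  iSup_le fun c => iSup_le fun _ => iSup₂_le fun hl hl' =>
    doubleOsc_le_oscModulus f c hl (hl'.trans hδ)

lemma doubleOsc_sub_le (hf : Measurable f) (g : 𝔼 n → ℝ) (c : 𝔼 n) (l : ℝ) :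
    doubleOsc (fun x => f x - g x) c l ≤ doubleOsc f c l + doubleOsc g c l :=
  meanDist_le_add hf fun x z => by
    simpa only [sub_eq_add_neg, edist_neg_neg] using edist_add_add_le (f x) (-g x) (f z) (-g z)

lemma oscModulus_le_add (hfg : Measurable fun x => f x - g x) (δ : ℝ) :
    oscModulus f δ ≤ oscModulus (fun x => f x - g x) δ + oscModulus g δ :=
  iSup_le fun c => iSup_le fun l => iSup₂_le fun hl hδ =>
    calc doubleOsc f c l ≤ doubleOsc (fun x => f x - g x) c l + doubleOsc g c l :=
          meanDist_le_add hfg fun x z => by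
            simpa only [sub_add_cancel] using edist_add_add_le (f x - g x) (g x) (f z - g z) (g z)
      _ ≤ _ := add_le_add (doubleOsc_le_oscModulus _ c hl hδ) (doubleOsc_le_oscModulus _ c hl hδ)

lemma doubleOsc_comp_add_right (hf : Measurable f) (c y : 𝔼 n) (l : ℝ) :
    doubleOsc (fun x => f (x + y)) c l = doubleOsc f (c + y) l := by
  rw [doubleOsc, doubleOsc, ← map_add_right_cubeMeasure, meanDist_map hf (by fun_prop)]
  rfl

lemma eBMONorm_sub_comp_add_right_le_two_mul (hf : Measurable f) (y : 𝔼 n) :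
    eBMONorm (fun x => f x - f (x + y)) ≤ 2 * eBMONorm f :=
  iSup_le fun c => iSup₂_le fun l hl =>
    calc doubleOsc (fun x => f x - f (x + y)) c l
        ≤ doubleOsc f c l + doubleOsc (fun x => f (x + y)) c l := doubleOsc_sub_le hf _ c l
      _ ≤ eBMONorm f + eBMONorm f := by
          rw [doubleOsc_comp_add_right hf]
          exact add_le_add (doubleOsc_le_eBMONorm f _ hl) (doubleOsc_le_eBMONorm f _ hl)
      _ = 2 * eBMONorm f := (two_mul _).symm

lemma ofReal_cubeOsc (hl : 0 < l) (hf : Integrable f (cubeMeasure c l)) :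
    ENNReal.ofReal (cubeOsc f c l) =
      ∫⁻ x, edist (f x) (∫ z, f z ∂cubeMeasure c l) ∂cubeMeasure c l := by
  simp_rw [edist_dist, Real.dist_eq]
  rw [cubeOsc_eq_integral f c hl]
  exact ofReal_integral_eq_lintegral_ofReal (hf.sub (integrable_const _)).abs
    (.of_forall fun _ => abs_nonneg _)

lemma ofReal_cubeOsc_le_doubleOsc (hl : 0 < l) (hf : Measurable f) :
    ENNReal.ofReal (cubeOsc f c l) ≤ doubleOsc f c l := by
  have := isProbabilityMeasure_cubeMeasure c hl
  by_cases hfin : doubleOsc f c l = ∞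
  · simp [hfin]
  · have hint := integrable_of_meanDist_ne_top hf hfin
    exact (ofReal_cubeOsc hl hint).trans_le (lintegral_edist_integral_le_meanDist hint)

lemma doubleOsc_le_two_mul_cubeOsc (hl : 0 < l) (hm : Measurable f)
    (hf : Integrable f (cubeMeasure c l)) :
    doubleOsc f c l ≤ 2 * ENNReal.ofReal (cubeOsc f c l) := by
  have := isProbabilityMeasure_cubeMeasure c hl
  rw [ofReal_cubeOsc hl hf]
  exact meanDist_self_le_two_mul_lintegral hm _

lemma integrable_cubeMeasure (hf : LocallyIntegrable f) (c : 𝔼 n) (hl : 0 < l) :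
    Integrable f (cubeMeasure c l) := by
  have hint : IntegrableOn f (cube c l) :=
    (hf.integrableOn_isCompact (isCompact_closedBall c (n * l))).mono_set
      (cube_subset_closedBall c l)
  exact hint.smul_measure (by simp [volume_cube c hl.le, hl])

lemma IsBMO.eBMONorm_ne_top (hf : IsBMO f) (hm : Measurable f) : eBMONorm f ≠ ∞ := by
  obtain ⟨hloc, C, hC⟩ := hf
  refine ne_top_of_le_ne_top (b := 2 * ENNReal.ofReal C) (by finiteness) ?_
  refine iSup_le fun c => iSup₂_le fun l hl => ?_
  refine (doubleOsc_le_two_mul_cubeOsc hl hm (integrable_cubeMeasure hloc c hl)).trans ?_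
  gcongr
  exact hC c l hl

lemma isVMO_iff_tendsto_oscModulus (hf : IsBMO f) (hm : Measurable f) :
    IsVMO f ↔ Tendsto (oscModulus f) (𝓝[>] 0) (𝓝 0) := by
  rw [IsVMO, and_iff_right hf, ENNReal.tendsto_nhds_zero]
  constructor
  · intro h ε hε
    obtain ⟨η, hη₀, hη⟩ : ∃ η : ℝ, 0 < η ∧ 2 * ENNReal.ofReal η ≤ ε := by
      have hlim : Tendsto (fun η : ℝ => 2 * ENNReal.ofReal η) (𝓝[>] 0) (𝓝 0) :=
        (((ENNReal.continuous_const_mul ENNReal.ofNat_ne_top).comp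
          ENNReal.continuous_ofReal).tendsto' 0 0 (by simp)).mono_left nhdsWithin_le_nhds
      exact (eventually_mem_nhdsWithin.and (ENNReal.tendsto_nhds_zero.1 hlim ε hε)).exists
    obtain ⟨δ, hδ₀, hδ⟩ := h η hη₀
    filter_upwards [Ioc_mem_nhdsGT hδ₀] with δ' hδ'
    refine (oscModulus_mono f hδ'.2).trans <|
      iSup_le fun c => iSup_le fun l => iSup₂_le fun hl hl' => ?_
    refine (doubleOsc_le_two_mul_cubeOsc hl hm (integrable_cubeMeasure hf.1 c hl)).trans
      (le_trans ?_ hη)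
    gcongr
    exact hδ c l hl hl'
  · intro h ε hε
    obtain ⟨δ, hδ, hδ₀⟩ := ((h (ENNReal.ofReal ε) (by simpa)).and self_mem_nhdsWithin).exists
    refine ⟨δ, hδ₀, fun c l hl hl' => ?_⟩
    rw [← ENNReal.ofReal_le_ofReal_iff hε.le]
    exact (ofReal_cubeOsc_le_doubleOsc hl hm).trans ((doubleOsc_le_oscModulus f c hl hl').trans hδ)

lemma bmoNorm_nonneg (f : 𝔼 n → ℝ) : 0 ≤ bmoNorm f :=
  Real.sInf_nonneg fun _ hC => hC.1

lemma cubeOsc_le_toReal_eBMONorm (hl : 0 < l) (hm : Measurable f) (hf : eBMONorm f ≠ ∞) :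
    cubeOsc f c l ≤ (eBMONorm f).toReal :=
  (ENNReal.ofReal_le_iff_le_toReal hf).1 <|
    (ofReal_cubeOsc_le_doubleOsc hl hm).trans (doubleOsc_le_eBMONorm f c hl)

lemma bmoNorm_le_toReal_eBMONorm (hm : Measurable f) (hf : eBMONorm f ≠ ∞) :
    bmoNorm f ≤ (eBMONorm f).toReal :=
  csInf_le ⟨0, fun _ hC => hC.1⟩
    ⟨ENNReal.toReal_nonneg, fun _ _ hl => cubeOsc_le_toReal_eBMONorm hl hm hf⟩

lemma cubeOsc_le_bmoNorm (hl : 0 < l) (hm : Measurable f) (hf : eBMONorm f ≠ ∞) :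
    cubeOsc f c l ≤ bmoNorm f :=
  le_csInf ⟨_, ENNReal.toReal_nonneg, fun _ _ hl => cubeOsc_le_toReal_eBMONorm hl hm hf⟩
    fun _ hC => hC.2 c l hl

lemma eBMONorm_le_two_mul_bmoNorm (hm : Measurable f) (hf : eBMONorm f ≠ ∞) :
    eBMONorm f ≤ 2 * ENNReal.ofReal (bmoNorm f) := by
  refine iSup_le fun c => iSup₂_le fun l hl => ?_
  have := isProbabilityMeasure_cubeMeasure c hl
  have hint : Integrable f (cubeMeasure c l) :=
    integrable_of_meanDist_ne_top hm (ne_top_of_le_ne_top hf (doubleOsc_le_eBMONorm f c hl))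
  refine (doubleOsc_le_two_mul_cubeOsc hl hm hint).trans ?_
  gcongr
  exact cubeOsc_le_bmoNorm hl hm hf

lemma tendsto_bmoNorm_iff {ι : Type*} {F : Filter ι} {u : ι → 𝔼 n → ℝ}
    (hm : ∀ᶠ i in F, Measurable (u i)) (hu : ∀ᶠ i in F, eBMONorm (u i) ≠ ∞) :
    Tendsto (fun i => bmoNorm (u i)) F (𝓝 0) ↔ Tendsto (fun i => eBMONorm (u i)) F (𝓝 0) := by
  constructor <;> intro h
  · have hlim : Tendsto (fun i => 2 * ENNReal.ofReal (bmoNorm (u i))) F (𝓝 0) := by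
      simpa using ENNReal.Tendsto.const_mul (ENNReal.tendsto_ofReal h) (.inr ENNReal.ofNat_ne_top)
    refine tendsto_of_tendsto_of_tendsto_of_le_of_le' tendsto_const_nhds hlim
      (.of_forall fun _ => zero_le) ?_
    filter_upwards [hm, hu] with i hm hu using eBMONorm_le_two_mul_bmoNorm hm hu
  · refine tendsto_of_tendsto_of_tendsto_of_le_of_le' tendsto_const_nhds
      ((ENNReal.tendsto_toReal ENNReal.zero_ne_top).comp h)
      (.of_forall fun _ => bmoNorm_nonneg _) ?_
    filter_upwards [hm, hu] with i hm hu using bmoNorm_le_toReal_eBMONorm hm hu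

end MeanOscillation

section Translation

variable {f : 𝔼 n → ℝ} {c c' x y : 𝔼 n} {l l' h : ℝ}

lemma meanDist_cubeMeasure_le {k : ℕ} [NeZero k] (hl : 0 < l) (hk : l' = k * l)
    (h : cube c l ⊆ cube c' l') :
    meanDist f (cubeMeasure c l) (cubeMeasure c' l') ≤ k ^ n * doubleOsc f c' l' :=
  meanDist_le_mul_of_le_smul (cubeMeasure_le_smul hl hk h)

lemma meanDist_cubeMeasure_dyadic_le (hf : Measurable f) (x : 𝔼 n) (k : ℕ) :
    meanDist f (cubeMeasure (lowerCorner x (2 ^ k)) (2 * 2 ^ k))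
      (cubeMeasure (lowerCorner x 1) (2 * 1)) ≤ (k + 1) * (2 ^ n * eBMONorm f) := by
  induction k with
  | zero =>
    calc _ ≤ 1 * eBMONorm f := by
          rw [one_mul, pow_zero]
          exact doubleOsc_le_eBMONorm f _ (by norm_num)
      _ ≤ 2 ^ n * eBMONorm f := by
          gcongr
          exact one_le_pow₀ one_le_two
      _ = _ := by simp
  | succ k ih =>
    have := isProbabilityMeasure_cubeMeasure (lowerCorner x (2 ^ k)) (l := 2 * 2 ^ k)
      (by positivity)
    have := isProbabilityMeasure_cubeMeasure (lowerCorner x (2 ^ (k + 1))) (l := 2 * 2 ^ (k + 1))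
      (by positivity)
    have := isProbabilityMeasure_cubeMeasure (lowerCorner x 1) (l := 2 * 1) (by norm_num)
    have hsub : cube (lowerCorner x (2 ^ k)) (2 * 2 ^ k) ⊆
        cube (lowerCorner x (2 ^ (k + 1))) (2 * 2 ^ (k + 1)) := fun z hz =>
      mem_cube_lowerCorner.2 fun i => (mem_cube_lowerCorner.1 hz i).trans <|
        pow_lt_pow_right₀ one_lt_two k.lt_succ_self
    have hdouble := meanDist_cubeMeasure_le (f := f) (k := 2) (by positivity)
      (by rw [pow_succ]; push_cast; ring) hsub
    rw [meanDist_comm hf] at hdouble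
    calc _ ≤ _ := meanDist_triangle hf
      _ ≤ 2 ^ n * eBMONorm f + (k + 1) * (2 ^ n * eBMONorm f) := by
        refine add_le_add (hdouble.trans ?_) ih
        push_cast
        gcongr
        exact doubleOsc_le_eBMONorm f _ (by positivity)
      _ = _ := by push_cast; ring

lemma lintegral_edist_comp_add_right_le (hf : Measurable f) (hh : 0 < h) (hy : ‖y‖ ≤ h)
    (c : 𝔼 n) :
    ∫⁻ x, edist (f x) (f (x + y)) ∂cubeMeasure c h ≤ 2 * 3 ^ n * oscModulus f (3 * h) := by
  have hmod : ∀ c', cube c' h ⊆ cube (lowerCorner c h) (3 * h) →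
      meanDist f (cubeMeasure c' h) (cubeMeasure (lowerCorner c h) (3 * h)) ≤
        3 ^ n * oscModulus f (3 * h) := fun c' hc' =>
    (meanDist_cubeMeasure_le (k := 3) hh (by norm_num) hc').trans <| by
      push_cast
      gcongr
      exact doubleOsc_le_oscModulus f _ (by positivity) le_rfl
  have hyi : ∀ i, |y i| ≤ h := fun i => (PiLp.norm_apply_le y i).trans hy
  have := isProbabilityMeasure_cubeMeasure (lowerCorner c h) (l := 3 * h) (by positivity)
  calc _ ≤ _ := lintegral_edist_comp_le hf (by fun_prop)
    _ ≤ 3 ^ n * oscModulus f (3 * h) + 3 ^ n * oscModulus f (3 * h) := by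
      rw [map_add_right_cubeMeasure]
      refine add_le_add (hmod c <| cube_subset_cube fun i => ?_)
        (hmod (c + y) <| cube_subset_cube fun i => ?_)
      · simp only [lowerCorner]
        constructor <;> linarith
      · have := abs_le.1 (hyi i)
        simp only [lowerCorner, PiLp.add_apply]
        constructor <;> linarith
    _ = _ := by ring

lemma eBMONorm_sub_comp_add_right_le_oscModulus (hf : Measurable f) (hh : 0 < h) (hy : ‖y‖ ≤ h) :
    eBMONorm (fun x => f x - f (x + y)) ≤ 4 * 6 ^ n * oscModulus f (3 * h) := by
  refine iSup_le fun c => iSup₂_le fun l hl => ?_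
  rcases le_total l h with hlh | hlh
  · calc doubleOsc (fun x => f x - f (x + y)) c l
        ≤ doubleOsc f c l + doubleOsc (fun x => f (x + y)) c l := doubleOsc_sub_le hf _ c l
      _ ≤ oscModulus f (3 * h) + oscModulus f (3 * h) := by
        rw [doubleOsc_comp_add_right hf]
        exact add_le_add (doubleOsc_le_oscModulus f _ hl (by linarith))
          (doubleOsc_le_oscModulus f _ hl (by linarith))
      _ = 2 * 1 * oscModulus f (3 * h) := by ring
      _ ≤ 4 * 6 ^ n * oscModulus f (3 * h) := by
        gcongr
        · norm_num
        · exact one_le_pow₀ (by norm_num)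
  · have := isProbabilityMeasure_cubeMeasure c hl
    calc doubleOsc (fun x => f x - f (x + y)) c l
        ≤ 2 * ∫⁻ x, edist (f x - f (x + y)) 0 ∂cubeMeasure c l :=
          meanDist_self_le_two_mul_lintegral (by fun_prop) 0
      _ = 2 * ∫⁻ x, edist (f x) (f (x + y)) ∂cubeMeasure c l := by
          simp_rw [edist_zero_right, edist_eq_enorm_sub]
      _ ≤ 2 * (2 ^ n * (2 * 3 ^ n * oscModulus f (3 * h))) := by
          gcongr
          exact lintegral_cubeMeasure_le_of_le (by fun_prop) hh hlh
            (lintegral_edist_comp_add_right_le hf hh hy) c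
      _ = 4 * (2 ^ n * 3 ^ n) * oscModulus f (3 * h) := by ring
      _ = 4 * 6 ^ n * oscModulus f (3 * h) := by rw [← mul_pow]; norm_num

lemma tendsto_eBMONorm_sub_comp_add_right (hf : Measurable f)
    (h : Tendsto (oscModulus f) (𝓝[>] 0) (𝓝 0)) :
    Tendsto (fun y => eBMONorm fun x => f x - f (x + y)) (𝓝 0) (𝓝 0) := by
  rw [ENNReal.tendsto_nhds_zero]
  intro ε hε
  have hlim : Tendsto (fun h => 4 * 6 ^ n * oscModulus f (3 * h)) (𝓝[>] 0) (𝓝 0) := by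
    have hscale : Tendsto (fun h : ℝ => 3 * h) (𝓝[>] 0) (𝓝[>] 0) :=
      tendsto_nhdsWithin_iff.2 ⟨((continuous_const_mul 3).tendsto' 0 0 (by simp)).mono_left
        nhdsWithin_le_nhds, eventually_mem_nhdsWithin.mono fun h (hh : 0 < h) => by simpa⟩
    simpa using ENNReal.Tendsto.const_mul (h.comp hscale) (.inr (by finiteness : 4 * 6 ^ n ≠ ∞))
  obtain ⟨h, hε, hh⟩ :=
    ((ENNReal.tendsto_nhds_zero.1 hlim ε hε).and eventually_mem_nhdsWithin).exists
  filter_upwards [Metric.closedBall_mem_nhds 0 hh] with y hy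
  exact (eBMONorm_sub_comp_add_right_le_oscModulus hf hh (by simpa using hy)).trans hε

lemma tendsto_oscModulus_of_uniformContinuous (hf : UniformContinuous f) :
    Tendsto (oscModulus f) (𝓝[>] 0) (𝓝 0) := by
  rw [ENNReal.tendsto_nhds_zero]
  intro ε hε
  obtain ⟨δ, hδ₀, hδ⟩ := EMetric.uniformContinuous_iff.1 hf ε hε
  have hdiam : Tendsto (fun η : ℝ => ENNReal.ofReal (n * η)) (𝓝[>] 0) (𝓝 0) :=
    ((ENNReal.continuous_ofReal.comp (continuous_const_mul (n : ℝ))).tendsto' 0 0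
      (by simp)).mono_left nhdsWithin_le_nhds
  filter_upwards [hdiam.eventually_lt_const hδ₀] with η hη
  refine iSup_le fun c => iSup_le fun l => iSup₂_le fun hl hlη => ?_
  have hclose : ∀ x ∈ cube c l, ∀ z ∈ cube c l, edist (f x) (f z) ≤ ε := by
    intro x hx z hz
    refine (hδ (lt_of_le_of_lt ?_ hη)).le
    rw [edist_dist, dist_eq_norm]
    gcongr
    refine (norm_le_of_forall_abs_le (r := l) fun i => ?_).trans (by gcongr)
    rw [PiLp.sub_apply, abs_le]
    constructor <;> linarith [(hx i).1, (hx i).2, (hz i).1, (hz i).2]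
  have := isProbabilityMeasure_cubeMeasure c hl
  calc doubleOsc f c l ≤ ∫⁻ _x, ∫⁻ _z, ε ∂cubeMeasure c l ∂cubeMeasure c l :=
        lintegral_mono_ae <| (ae_mem_cube c l).mono fun x hx =>
          lintegral_mono_ae <| (ae_mem_cube c l).mono fun z hz => hclose x hx z hz
    _ = ε := by simp

end Translation

section PoissonKernel

variable {t τ b ρ h : ℝ} {u v y : 𝔼 n}

lemma poissonHK_eq (t : ℝ) (x : 𝔼 n) :
    poissonHK n t x = poissonHK n 1 (0 : 𝔼 n) * t / √(t ^ 2 + ‖x‖ ^ 2) ^ (n + 1) := by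
  have hpow : (t ^ 2 + ‖x‖ ^ 2) ^ (((n : ℝ) + 1) / 2) = √(t ^ 2 + ‖x‖ ^ 2) ^ (n + 1) := by
    rw [Real.sqrt_eq_rpow, ← Real.rpow_mul_natCast (by positivity)]
    congr 1
    push_cast
    ring
  simp [poissonHK, hpow]

lemma poissonHK_pos (ht : 0 < t) (x : 𝔼 n) : 0 < poissonHK n t x := by
  have := Real.Gamma_pos_of_pos (show 0 < ((n : ℝ) + 1) / 2 by positivity)
  rw [poissonHK]
  positivity

lemma poissonHK_neg (t : ℝ) (x : 𝔼 n) : poissonHK n t (-x) = poissonHK n t x := by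
  simp [poissonHK]

@[fun_prop]
lemma measurable_poissonHK (t : ℝ) : Measurable (poissonHK n t) := by
  unfold poissonHK
  fun_prop

lemma poissonHK_le_mul_poissonHK (ht : 0 < t) (hτ : 0 < τ) (hb : 0 ≤ b)
    (h : τ ^ 2 + ‖v‖ ^ 2 ≤ b ^ 2 * (t ^ 2 + ‖u‖ ^ 2)) :
    poissonHK n t u ≤ t / τ * b ^ (n + 1) * poissonHK n τ v := by
  have hsqrt : √(τ ^ 2 + ‖v‖ ^ 2) ≤ b * √(t ^ 2 + ‖u‖ ^ 2) := by
    rw [← Real.sqrt_sq hb, ← Real.sqrt_mul (sq_nonneg b)]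
    exact Real.sqrt_le_sqrt h
  have : 0 < √(τ ^ 2 + ‖v‖ ^ 2) := by positivity
  have : 0 < √(t ^ 2 + ‖u‖ ^ 2) := by positivity
  have hc := poissonHK_pos one_pos (0 : 𝔼 n)
  rw [poissonHK_eq t, poissonHK_eq τ]
  calc poissonHK n 1 (0 : 𝔼 n) * t / √(t ^ 2 + ‖u‖ ^ 2) ^ (n + 1)
      = poissonHK n 1 (0 : 𝔼 n) * t * √(τ ^ 2 + ‖v‖ ^ 2) ^ (n + 1) /
          (√(t ^ 2 + ‖u‖ ^ 2) ^ (n + 1) * √(τ ^ 2 + ‖v‖ ^ 2) ^ (n + 1)) := by field_simp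
    _ ≤ poissonHK n 1 (0 : 𝔼 n) * t * (b * √(t ^ 2 + ‖u‖ ^ 2)) ^ (n + 1) /
          (√(t ^ 2 + ‖u‖ ^ 2) ^ (n + 1) * √(τ ^ 2 + ‖v‖ ^ 2) ^ (n + 1)) := by gcongr
    _ = _ := by
        rw [mul_pow]
        field_simp

lemma poissonHK_le_of_norm_sub_le (ht : 0 < t) (hρ : 0 ≤ ρ) (h : ‖u - v‖ ≤ ρ * t) :
    poissonHK n t u ≤ (1 + ρ) ^ (n + 1) * poissonHK n t v := by
  have hv : ‖v‖ ≤ ‖u‖ + ρ * t := by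
    linarith [norm_sub_norm_le v u, norm_sub_rev u v]
  have hsq : t ^ 2 + ‖v‖ ^ 2 ≤ (1 + ρ) ^ 2 * (t ^ 2 + ‖u‖ ^ 2) := by
    have : ‖v‖ ^ 2 ≤ (‖u‖ + ρ * t) ^ 2 := by gcongr
    nlinarith [mul_nonneg hρ (sq_nonneg (t - ‖u‖)), sq_nonneg (ρ * ‖u‖)]
  simpa [ht.ne'] using poissonHK_le_mul_poissonHK ht ht (by positivity) hsq

lemma abs_poissonHK_sub_le (ht : 0 < t) (hρ : 0 ≤ ρ) (h : ‖u - v‖ ≤ ρ * t) :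
    |poissonHK n t u - poissonHK n t v| ≤ ((1 + ρ) ^ (n + 1) - 1) * poissonHK n t u := by
  have huv := poissonHK_le_of_norm_sub_le ht hρ h
  have hvu := poissonHK_le_of_norm_sub_le ht hρ (by rwa [norm_sub_rev] : ‖v - u‖ ≤ ρ * t)
  have hK : 1 ≤ (1 + ρ) ^ (n + 1) := one_le_pow₀ (by linarith)
  rw [abs_le]
  constructor
  · linarith
  · rcases le_total (poissonHK n t u) (poissonHK n t v) with hle | hle
    · nlinarith [poissonHK_pos ht u]
    · nlinarith [poissonHK_pos ht v]

lemma poissonHK_le_of_le_norm (ht : 0 < t) (hh : 0 < h) (hy : h ≤ ‖y‖) :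
    poissonHK n t y ≤ t * (1 + 1 / h) ^ (n + 1) * poissonHK n 1 y := by
  have hsq : (1 : ℝ) ^ 2 + ‖y‖ ^ 2 ≤ (1 + 1 / h) ^ 2 * (t ^ 2 + ‖y‖ ^ 2) := by
    have hdiv : 1 ≤ 1 / h * ‖y‖ := by rwa [one_div_mul_eq_div, one_le_div hh]
    nlinarith [sq_nonneg ((1 + 1 / h) * t), show 0 ≤ ‖y‖ * (1 / h * ‖y‖) by positivity]
  simpa using poissonHK_le_mul_poissonHK ht one_pos (by positivity) hsq

lemma lintegral_rpow_mul_exp_neg_mul_Ioi {a r : ℝ} (ha : 0 < a) (hr : 0 < r) :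
    ∫⁻ s in Ioi (0 : ℝ), ENNReal.ofReal (s ^ (a - 1) * rexp (-(r * s))) =
      ENNReal.ofReal ((1 / r) ^ a * Real.Gamma a) := by
  have hint := Real.integral_rpow_mul_exp_neg_mul_Ioi ha hr
  have := Real.Gamma_pos_of_pos ha
  rw [← hint, ofReal_integral_eq_lintegral_ofReal]
  · exact .of_integral_ne_zero (by rw [hint]; positivity)
  · filter_upwards [ae_restrict_mem measurableSet_Ioi] with s (hs : 0 < s)
    simp only [Pi.zero_apply]
    positivity

lemma lintegral_exp_neg_mul_sq_norm {V : Type*} [NormedAddCommGroup V] [InnerProductSpace ℝ V]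
    [FiniteDimensional ℝ V] [MeasurableSpace V] [BorelSpace V] {s : ℝ} (hs : 0 < s) :
    ∫⁻ y : V, ENNReal.ofReal (rexp (-s * ‖y‖ ^ 2)) =
      ENNReal.ofReal ((π / s) ^ (Module.finrank ℝ V / 2 : ℝ)) := by
  have hint := GaussianFourier.integral_rexp_neg_mul_sq_norm (V := V) hs
  rw [← hint, ofReal_integral_eq_lintegral_ofReal]
  · exact .of_integral_ne_zero (by rw [hint]; positivity)
  · exact .of_forall fun y => (Real.exp_pos _).le

-- Subordination: `P_t` is a mixture of Gaussians, so its total mass reduces to `Γ(1/2) = √π`.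
lemma ofReal_poissonHK_eq_lintegral (ht : 0 < t) (y : 𝔼 n) :
    ENNReal.ofReal (poissonHK n t y) = ∫⁻ s in Ioi (0 : ℝ), ENNReal.ofReal
      (t / π ^ (((n : ℝ) + 1) / 2) * (s ^ (((n : ℝ) + 1) / 2 - 1) * rexp (-(t ^ 2 * s)))) *
        ENNReal.ofReal (rexp (-s * ‖y‖ ^ 2)) := by
  set a : ℝ := ((n : ℝ) + 1) / 2 with ha
  calc ENNReal.ofReal (poissonHK n t y)
      = ENNReal.ofReal (t / π ^ a) *
          ENNReal.ofReal ((1 / (t ^ 2 + ‖y‖ ^ 2)) ^ a * Real.Gamma a) := by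
        rw [← ENNReal.ofReal_mul (by positivity), Real.div_rpow one_pos.le (by positivity),
          Real.one_rpow, poissonHK, ← ha]
        congr 1
        field_simp
    _ = ∫⁻ s in Ioi (0 : ℝ), ENNReal.ofReal (t / π ^ a) *
          ENNReal.ofReal (s ^ (a - 1) * rexp (-((t ^ 2 + ‖y‖ ^ 2) * s))) := by
        rw [← lintegral_rpow_mul_exp_neg_mul_Ioi (by positivity) (by positivity),
          lintegral_const_mul' _ _ ENNReal.ofReal_ne_top]
    _ = _ := by
        refine setLIntegral_congr_fun measurableSet_Ioi fun s (hs : 0 < s) => ?_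
        rw [← ENNReal.ofReal_mul (by positivity), ← ENNReal.ofReal_mul (by positivity), mul_assoc,
          mul_assoc, ← Real.exp_add]
        ring_nf

lemma lintegral_poissonHK (ht : 0 < t) :
    ∫⁻ y : 𝔼 n, ENNReal.ofReal (poissonHK n t y) = 1 := by
  set a : ℝ := ((n : ℝ) + 1) / 2 with ha
  have hpi : π ^ a = π ^ ((n : ℝ) / 2) * √π := by
    rw [Real.sqrt_eq_rpow, ← Real.rpow_add Real.pi_pos, ha, add_div]
  have hgauss : ∀ s ∈ Ioi (0 : ℝ), ∫⁻ y : 𝔼 n,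
      ENNReal.ofReal (t / π ^ a * (s ^ (a - 1) * rexp (-(t ^ 2 * s)))) *
        ENNReal.ofReal (rexp (-s * ‖y‖ ^ 2)) =
      ENNReal.ofReal (t / √π) *
        ENNReal.ofReal (s ^ ((1 / 2 : ℝ) - 1) * rexp (-(t ^ 2 * s))) := by
    intro s (hs : 0 < s)
    have hsa : s ^ (a - 1) = s ^ ((1 / 2 : ℝ) - 1) * s ^ ((n : ℝ) / 2) := by
      rw [← Real.rpow_add hs, ha]
      ring_nf
    rw [lintegral_const_mul' _ _ ENNReal.ofReal_ne_top, lintegral_exp_neg_mul_sq_norm hs,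
      finrank_euclideanSpace_fin, ← ENNReal.ofReal_mul (by positivity),
      ← ENNReal.ofReal_mul (by positivity), Real.div_rpow Real.pi_pos.le hs.le, hpi, hsa]
    congr 1
    field_simp
  calc ∫⁻ y : 𝔼 n, ENNReal.ofReal (poissonHK n t y)
      = ∫⁻ s in Ioi (0 : ℝ), ∫⁻ y : 𝔼 n,
          ENNReal.ofReal (t / π ^ a * (s ^ (a - 1) * rexp (-(t ^ 2 * s)))) *
            ENNReal.ofReal (rexp (-s * ‖y‖ ^ 2)) := by
        simp_rw [ofReal_poissonHK_eq_lintegral ht]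
        exact lintegral_lintegral_swap (Measurable.aemeasurable (by fun_prop))
    _ = ENNReal.ofReal (t / √π) * ENNReal.ofReal ((1 / t ^ 2) ^ (1 / 2 : ℝ) * √π) := by
        rw [setLIntegral_congr_fun measurableSet_Ioi hgauss,
          lintegral_const_mul' _ _ ENNReal.ofReal_ne_top,
          lintegral_rpow_mul_exp_neg_mul_Ioi (by norm_num) (by positivity), Real.Gamma_one_half_eq]
    _ = 1 := by
        rw [← Real.sqrt_eq_rpow, Real.sqrt_div zero_le_one, Real.sqrt_sq ht.le, Real.sqrt_one,
          ← ENNReal.ofReal_mul (by positivity), ← ENNReal.ofReal_one]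
        congr 1
        field_simp

lemma integrable_poissonHK (ht : 0 < t) : Integrable (poissonHK n t) :=
  (lintegral_ofReal_ne_top_iff_integrable (measurable_poissonHK t).aestronglyMeasurable
    (.of_forall fun y => (poissonHK_pos ht y).le)).1 (by simp [lintegral_poissonHK ht])

lemma integral_poissonHK (ht : 0 < t) : ∫ y : 𝔼 n, poissonHK n t y = 1 := by
  rw [integral_eq_lintegral_of_nonneg_ae (.of_forall fun y => (poissonHK_pos ht y).le)
    (measurable_poissonHK t).aestronglyMeasurable, lintegral_poissonHK ht, ENNReal.toReal_one]

lemma tendsto_lintegral_poissonHK_mul {G : 𝔼 n → ℝ≥0∞} {M : ℝ≥0∞} (hM : M ≠ ∞)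
    (hGM : ∀ y, G y ≤ M) (hG : Tendsto G (𝓝 0) (𝓝 0)) :
    Tendsto (fun t => ∫⁻ y, ENNReal.ofReal (poissonHK n t y) * G y) (𝓝[>] 0) (𝓝 0) := by
  rw [ENNReal.tendsto_nhds_zero]
  intro ε hε
  obtain ⟨h, hh, hGε⟩ := Metric.eventually_nhds_iff.1
    (ENNReal.tendsto_nhds_zero.1 hG (ε / 2) (ENNReal.half_pos hε.ne'))
  have hsplit : ∀ t > 0, ∀ y, ENNReal.ofReal (poissonHK n t y) * G y ≤
      ENNReal.ofReal (poissonHK n t y) * (ε / 2) +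
        ENNReal.ofReal (t * (1 + 1 / h) ^ (n + 1)) * M * ENNReal.ofReal (poissonHK n 1 y) := by
    intro t ht y
    by_cases hy : ‖y‖ < h
    · exact le_add_right (by gcongr; exact hGε (by simpa using hy))
    · refine le_add_left ?_
      rw [mul_right_comm, ← ENNReal.ofReal_mul (by positivity)]
      gcongr
      · exact poissonHK_le_of_le_norm ht hh (not_lt.1 hy)
      · exact hGM y
  have htail : Tendsto (fun t => ENNReal.ofReal (t * (1 + 1 / h) ^ (n + 1)) * M) (𝓝[>] 0)
      (𝓝 0) := by
    have hcont : Continuous fun t : ℝ => ENNReal.ofReal (t * (1 + 1 / h) ^ (n + 1)) * M :=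
      (ENNReal.continuous_mul_const hM).comp
        (ENNReal.continuous_ofReal.comp (continuous_mul_const _))
    exact (hcont.tendsto' 0 0 (by simp)).mono_left nhdsWithin_le_nhds
  filter_upwards [ENNReal.tendsto_nhds_zero.1 htail (ε / 2) (ENNReal.half_pos hε.ne'),
    self_mem_nhdsWithin] with t htε (ht : 0 < t)
  calc ∫⁻ y, ENNReal.ofReal (poissonHK n t y) * G y
      ≤ ∫⁻ y, (ENNReal.ofReal (poissonHK n t y) * (ε / 2) +
          ENNReal.ofReal (t * (1 + 1 / h) ^ (n + 1)) * M * ENNReal.ofReal (poissonHK n 1 y)) :=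
        lintegral_mono (hsplit t ht)
    _ = ε / 2 + ENNReal.ofReal (t * (1 + 1 / h) ^ (n + 1)) * M := by
        rw [lintegral_add_left (by fun_prop), lintegral_mul_const _ (by fun_prop),
          lintegral_const_mul _ (by fun_prop), lintegral_poissonHK ht, lintegral_poissonHK one_pos,
          one_mul, mul_one]
    _ ≤ ε / 2 + ε / 2 := by gcongr
    _ = ε := ENNReal.add_halves ε

end PoissonKernel

section PoissonExtension

variable {f : 𝔼 n → ℝ} {t : ℝ}

lemma exists_poissonHK_le_dyadic (n : ℕ) (ht : 0 < t) : ∃ C ≥ 0, ∀ u : 𝔼 n, ∃ k : ℕ,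
    u ∈ cube (lowerCorner 0 (2 ^ k)) (2 * 2 ^ k) ∧
      poissonHK n t u ≤ C * ((2 : ℝ) ^ k)⁻¹ ^ (n + 1) := by
  set m : ℝ := min t 1 / 2 with hm
  have hm₀ : 0 < m := by positivity
  refine ⟨t / m * poissonHK n m 0, by have := poissonHK_pos hm₀ (0 : 𝔼 n); positivity, fun u => ?_⟩
  obtain ⟨j, hj, hj'⟩ := exists_nat_pow_near (le_max_left 1 ‖u‖) one_lt_two
  refine ⟨j + 1, mem_cube_lowerCorner.2 fun i => ?_, ?_⟩
  · rw [PiLp.zero_apply, sub_zero]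
    exact (PiLp.norm_apply_le u i).trans_lt ((le_max_right _ _).trans_lt hj')
  have hmax : m * 2 ^ (j + 1) ≤ max t ‖u‖ :=
    calc m * 2 ^ (j + 1) = min t 1 * 2 ^ j := by rw [hm]; ring
      _ ≤ min t 1 * max 1 ‖u‖ := by gcongr
      _ ≤ max t ‖u‖ := by
        rw [mul_max_of_nonneg _ _ (by positivity), mul_one]
        exact max_le_max (min_le_left _ _)
          (mul_le_of_le_one_left (norm_nonneg u) (min_le_right _ _))
  have hsq : (m * 2 ^ (j + 1)) ^ 2 ≤ t ^ 2 + ‖u‖ ^ 2 := by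
    refine (pow_le_pow_left₀ (by positivity) hmax 2).trans ?_
    rcases max_cases t ‖u‖ with ⟨h, -⟩ | ⟨h, -⟩ <;> rw [h] <;> nlinarith
  rw [mul_right_comm]
  refine poissonHK_le_mul_poissonHK ht hm₀ (by positivity) ?_
  rw [inv_pow, inv_mul_eq_div, le_div_iff₀ (by positivity)]
  simpa [mul_pow] using hsq

lemma tsum_natCast_succ_mul_inv_two_pow_ne_top :
    ∑' k : ℕ, ((k : ℝ≥0∞) + 1) * ((2 : ℝ≥0∞) ^ k)⁻¹ ≠ ∞ := by
  have hsum : Summable fun k : ℕ => ((k : ℝ) + 1) * (2⁻¹) ^ k := by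
    simpa [add_mul] using (summable_pow_mul_geometric_of_norm_lt_one 1
      (r := (2⁻¹ : ℝ)) (by norm_num)).add (summable_geometric_of_lt_one
        (r := (2⁻¹ : ℝ)) (by norm_num) (by norm_num))
  convert hsum.tsum_ofReal_ne_top using 4 with k
  rw [ENNReal.ofReal_mul (by positivity), ENNReal.ofReal_add (by positivity) zero_le_one,
    ENNReal.ofReal_natCast, ENNReal.ofReal_one, ENNReal.ofReal_pow (by positivity),
    ENNReal.ofReal_inv_of_pos two_pos, ENNReal.ofReal_ofNat, ENNReal.inv_pow]

lemma ofReal_dyadic_weight_mul_volume {C : ℝ} (hC : 0 ≤ C) (n k : ℕ) :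
    ENNReal.ofReal (C * ((2 : ℝ) ^ k)⁻¹ ^ (n + 1)) * ENNReal.ofReal ((2 * 2 ^ k) ^ n) =
      ENNReal.ofReal C * 2 ^ n * (2 ^ k)⁻¹ := by
  have hcancel : C * ((2 : ℝ) ^ k)⁻¹ ^ (n + 1) * (2 * 2 ^ k) ^ n = C * 2 ^ n * (2 ^ k)⁻¹ := by
    have : ((2 : ℝ) ^ k)⁻¹ ^ n * (2 ^ k) ^ n = 1 := by
      rw [← mul_pow, inv_mul_cancel₀ (by positivity), one_pow]
    linear_combination C * 2 ^ n * (2 ^ k)⁻¹ * this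
  rw [← ENNReal.ofReal_mul (by positivity), hcancel, ENNReal.ofReal_mul (by positivity),
    ENNReal.ofReal_mul hC, ENNReal.ofReal_inv_of_pos (by positivity)]
  simp [ENNReal.ofReal_pow]

lemma exists_lintegral_poissonHK_mul_le_tsum (n : ℕ) (ht : 0 < t) : ∃ C ≠ ∞,
    ∀ (x : 𝔼 n) (g : 𝔼 n → ℝ≥0∞), Measurable g →
      ∫⁻ y, ENNReal.ofReal (poissonHK n t (x - y)) * g y ≤ ∑' k : ℕ, C * (2 ^ k)⁻¹ *
        ∫⁻ y, g y ∂cubeMeasure (lowerCorner x (2 ^ k)) (2 * 2 ^ k) := by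
  obtain ⟨C, hC₀, hC⟩ := exists_poissonHK_le_dyadic n ht
  refine ⟨ENNReal.ofReal C * 2 ^ n, by finiteness, fun x g hg => ?_⟩
  have hpointwise : ∀ y, ENNReal.ofReal (poissonHK n t (x - y)) * g y ≤
      ∑' k : ℕ, ENNReal.ofReal (C * ((2 : ℝ) ^ k)⁻¹ ^ (n + 1)) *
        (cube (lowerCorner x (2 ^ k)) (2 * 2 ^ k)).indicator g y := by
    intro y
    obtain ⟨k, hk, hle⟩ := hC (x - y)
    refine le_trans ?_ (ENNReal.le_tsum k)
    have hy : y ∈ cube (lowerCorner x (2 ^ k)) (2 * 2 ^ k) := mem_cube_lowerCorner.2 fun i => by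
      simpa [abs_sub_comm] using mem_cube_lowerCorner.1 hk i
    rw [indicator_of_mem hy]
    gcongr
  refine (lintegral_mono hpointwise).trans_eq ?_
  rw [lintegral_tsum fun k =>
    ((hg.indicator (measurableSet_cube _ _)).const_mul _).aemeasurable]
  refine tsum_congr fun k => ?_
  rw [lintegral_const_mul _ (hg.indicator (measurableSet_cube _ _)),
    lintegral_indicator (measurableSet_cube _ _), restrict_cube_eq_smul _ (by positivity),
    lintegral_smul_measure, smul_eq_mul, ← mul_assoc, ofReal_dyadic_weight_mul_volume hC₀]

lemma exists_lintegral_poissonHK_mul_meanDist_le (hf : Measurable f) (hfin : eBMONorm f ≠ ∞)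
    (ht : 0 < t) : ∃ D ≠ ∞, ∀ x, ∫⁻ y, ENNReal.ofReal (poissonHK n t (x - y)) *
      ∫⁻ z, edist (f y) (f z) ∂cubeMeasure (lowerCorner x 1) (2 * 1) ≤ D := by
  obtain ⟨C, hC, hle⟩ := exists_lintegral_poissonHK_mul_le_tsum n ht
  refine ⟨∑' k : ℕ, C * (2 ^ n * eBMONorm f) * ((k + 1) * (2 ^ k)⁻¹), ?_, fun x => ?_⟩
  · rw [ENNReal.tsum_mul_left]
    exact ENNReal.mul_ne_top (by finiteness) tsum_natCast_succ_mul_inv_two_pow_ne_top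
  refine (hle x _ (by fun_prop)).trans (ENNReal.tsum_le_tsum fun k => ?_)
  refine (mul_le_mul_right (meanDist_cubeMeasure_dyadic_le hf x k) _).trans_eq ?_
  ring

lemma exists_lintegral_poissonHK_mul_edist_le (hf : Measurable f) (hfin : eBMONorm f ≠ ∞)
    (ht : 0 < t) : ∃ D ≠ ∞, ∀ x, ∃ a : ℝ,
      ∫⁻ y, ENNReal.ofReal (poissonHK n t (x - y)) * edist (f y) a ≤ D := by
  obtain ⟨D, hD, hle⟩ := exists_lintegral_poissonHK_mul_meanDist_le hf hfin ht
  refine ⟨D, hD, fun x => ?_⟩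
  have := isProbabilityMeasure_cubeMeasure (lowerCorner x 1) (l := 2 * 1) (by norm_num)
  obtain ⟨z, hz⟩ := exists_le_lintegral (μ := cubeMeasure (lowerCorner x 1) (2 * 1))
    (f := fun z => ∫⁻ y, ENNReal.ofReal (poissonHK n t (x - y)) * edist (f y) (f z))
    (Measurable.aemeasurable (by fun_prop))
  refine ⟨f z, hz.trans (le_trans (le_of_eq ?_) (hle x))⟩
  rw [lintegral_lintegral_swap (Measurable.aemeasurable (by fun_prop))]
  exact lintegral_congr fun y => lintegral_const_mul' _ _ ENNReal.ofReal_ne_top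

lemma integrable_poissonHK_mul_sub (hf : Measurable f) (hfin : eBMONorm f ≠ ∞) (ht : 0 < t)
    (x : 𝔼 n) (a : ℝ) : Integrable fun y => poissonHK n t (x - y) * (f y - a) := by
  obtain ⟨D, hD, hle⟩ := exists_lintegral_poissonHK_mul_edist_le hf hfin ht
  obtain ⟨b, hb⟩ := hle x
  have hint : Integrable fun y => poissonHK n t (x - y) * (f y - b) := by
    refine ⟨Measurable.aestronglyMeasurable (by fun_prop), ?_⟩
    refine lt_of_eq_of_lt (lintegral_congr fun y => ?_) (hb.trans_lt hD.lt_top)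
    rw [enorm_mul, Real.enorm_of_nonneg (poissonHK_pos ht _).le, edist_eq_enorm_sub]
  refine (hint.add (((integrable_poissonHK ht).comp_sub_left x).mul_const (b - a))).congr
    (.of_forall fun y => ?_)
  simp only [Pi.add_apply]
  ring

lemma poissonExt_sub_const (hf : Measurable f) (hfin : eBMONorm f ≠ ∞) (ht : 0 < t)
    (x : 𝔼 n) (a : ℝ) :
    poissonExt f x t - a = ∫ y, poissonHK n t (x - y) * (f y - a) := by
  have hint : Integrable fun y => poissonHK n t (x - y) * f y := by
    simpa using integrable_poissonHK_mul_sub hf hfin ht x 0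
  simp_rw [mul_sub]
  rw [integral_sub hint (((integrable_poissonHK ht).comp_sub_left x).mul_const a),
    integral_mul_const, integral_sub_left_eq_self (poissonHK n t), integral_poissonHK ht, one_mul]
  rfl

lemma exists_edist_poissonExt_le (hf : Measurable f) (hfin : eBMONorm f ≠ ∞) (ht : 0 < t) :
    ∃ D ≠ ∞, ∀ ρ ≥ 0, ∀ x x', ‖x - x'‖ ≤ ρ * t →
      edist (poissonExt f x t) (poissonExt f x' t) ≤
        ENNReal.ofReal ((1 + ρ) ^ (n + 1) - 1) * D := by
  obtain ⟨D, hD, hle⟩ := exists_lintegral_poissonHK_mul_edist_le hf hfin ht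
  refine ⟨D, hD, fun ρ hρ x x' hx => ?_⟩
  obtain ⟨a, ha⟩ := hle x
  calc edist (poissonExt f x t) (poissonExt f x' t)
      = edist (poissonExt f x t - a) (poissonExt f x' t - a) := (edist_sub_right _ _ _).symm
    _ ≤ ∫⁻ y, edist (poissonHK n t (x - y) * (f y - a)) (poissonHK n t (x' - y) * (f y - a)) := by
      rw [poissonExt_sub_const hf hfin ht, poissonExt_sub_const hf hfin ht]
      exact edist_integral_le_lintegral_edist (integrable_poissonHK_mul_sub hf hfin ht x a)
        (integrable_poissonHK_mul_sub hf hfin ht x' a)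
    _ ≤ ∫⁻ y, ENNReal.ofReal ((1 + ρ) ^ (n + 1) - 1) *
          (ENNReal.ofReal (poissonHK n t (x - y)) * edist (f y) a) := by
      refine lintegral_mono fun y => ?_
      rw [edist_eq_enorm_sub, edist_eq_enorm_sub, ← sub_mul, enorm_mul, ← mul_assoc,
        ← ENNReal.ofReal_mul' (poissonHK_pos ht _).le, Real.enorm_eq_ofReal_abs (_ - _)]
      gcongr
      exact abs_poissonHK_sub_le ht hρ (by simpa using hx)
    _ ≤ ENNReal.ofReal ((1 + ρ) ^ (n + 1) - 1) * D := by
      rw [lintegral_const_mul' _ _ ENNReal.ofReal_ne_top]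
      gcongr

lemma uniformContinuous_poissonExt (hf : Measurable f) (hfin : eBMONorm f ≠ ∞) (ht : 0 < t) :
    UniformContinuous (poissonExt f · t) := by
  obtain ⟨D, hD, hle⟩ := exists_edist_poissonExt_le hf hfin ht
  have hlim : Tendsto (fun ρ : ℝ => ENNReal.ofReal ((1 + ρ) ^ (n + 1) - 1) * D) (𝓝[>] 0) (𝓝 0) := by
    have hcont : Continuous fun ρ : ℝ => ENNReal.ofReal ((1 + ρ) ^ (n + 1) - 1) * D :=
      (ENNReal.continuous_mul_const hD).comp (ENNReal.continuous_ofReal.comp (by fun_prop))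
    exact (hcont.tendsto' 0 0 (by simp)).mono_left nhdsWithin_le_nhds
  refine EMetric.uniformContinuous_iff.2 fun ε hε => ?_
  obtain ⟨ρ, hρε, hρ : 0 < ρ⟩ :=
    ((hlim.eventually_lt_const hε).and eventually_mem_nhdsWithin).exists
  refine ⟨ENNReal.ofReal (ρ * t), by simp [hρ, ht], fun {x x'} hx =>
    (hle ρ hρ.le x x' ?_).trans_lt hρε⟩
  rw [edist_dist, dist_eq_norm] at hx
  exact ((ENNReal.ofReal_lt_ofReal_iff (by positivity)).1 hx).le

lemma sub_poissonExt (hf : Measurable f) (hfin : eBMONorm f ≠ ∞) (ht : 0 < t) (x : 𝔼 n) :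
    f x - poissonExt f x t = ∫ y, poissonHK n t y * (f x - f (x + y)) := by
  rw [← neg_sub, poissonExt_sub_const hf hfin ht, ← integral_neg,
    ← integral_add_left_eq_self _ x]
  simp [poissonHK_neg, ← mul_neg]

lemma integrable_poissonHK_mul_sub_comp_add (hf : Measurable f) (hfin : eBMONorm f ≠ ∞)
    (ht : 0 < t) (x : 𝔼 n) : Integrable fun y => poissonHK n t y * (f x - f (x + y)) := by
  refine ((integrable_poissonHK_mul_sub hf hfin ht x (f x)).comp_add_left x).neg.congr
    (.of_forall fun y => ?_)
  simp [poissonHK_neg, ← mul_neg]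

lemma eBMONorm_sub_poissonExt_le (hf : Measurable f) (hfin : eBMONorm f ≠ ∞) (ht : 0 < t) :
    eBMONorm (fun x => f x - poissonExt f x t) ≤
      ∫⁻ y, ENNReal.ofReal (poissonHK n t y) * eBMONorm fun x => f x - f (x + y) := by
  refine iSup_le fun c => iSup₂_le fun l hl => ?_
  simp_rw [sub_poissonExt hf hfin ht]
  calc _ ≤ ∫⁻ y, doubleOsc (fun x => poissonHK n t y * (f x - f (x + y))) c l :=
        meanDist_integral_le (by fun_prop) (integrable_poissonHK_mul_sub_comp_add hf hfin ht)
    _ ≤ _ := by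
      refine lintegral_mono fun y => ?_
      refine (meanDist_const_smul (poissonHK n t y) _ _ _).trans_le ?_
      rw [Real.enorm_of_nonneg (poissonHK_pos ht y).le]
      gcongr
      exact doubleOsc_le_eBMONorm _ c hl

end PoissonExtension

section VanishingMeanOscillation

variable {f g : 𝔼 n → ℝ}

lemma eBMONorm_sub_poissonExt_le_two_mul (hf : Measurable f) (hfin : eBMONorm f ≠ ∞) {t : ℝ}
    (ht : 0 < t) : eBMONorm (fun x => f x - poissonExt f x t) ≤ 2 * eBMONorm f :=
  calc _ ≤ ∫⁻ y, ENNReal.ofReal (poissonHK n t y) * eBMONorm fun x => f x - f (x + y) :=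
        eBMONorm_sub_poissonExt_le hf hfin ht
    _ ≤ ∫⁻ y : 𝔼 n, ENNReal.ofReal (poissonHK n t y) * (2 * eBMONorm f) := by
        gcongr
        exact eBMONorm_sub_comp_add_right_le_two_mul hf _
    _ = 2 * eBMONorm f := by
        rw [lintegral_mul_const _ (by fun_prop), lintegral_poissonHK ht, one_mul]

lemma tendsto_eBMONorm_sub_poissonExt (hf : Measurable f) (hfin : eBMONorm f ≠ ∞)
    (h : Tendsto (oscModulus f) (𝓝[>] 0) (𝓝 0)) :
    Tendsto (fun t => eBMONorm fun x => f x - poissonExt f x t) (𝓝[>] 0) (𝓝 0) := by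
  have hlim := tendsto_lintegral_poissonHK_mul (by finiteness : 2 * eBMONorm f ≠ ∞)
    (eBMONorm_sub_comp_add_right_le_two_mul hf) (tendsto_eBMONorm_sub_comp_add_right hf h)
  refine tendsto_of_tendsto_of_tendsto_of_le_of_le' tendsto_const_nhds hlim
    (.of_forall fun _ => zero_le) ?_
  filter_upwards [self_mem_nhdsWithin] with t ht using eBMONorm_sub_poissonExt_le hf hfin ht

lemma measurable_sub_poissonExt (hf : Measurable f) (hfin : eBMONorm f ≠ ∞) {t : ℝ}
    (ht : 0 < t) : Measurable fun x => f x - poissonExt f x t :=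
  hf.sub (uniformContinuous_poissonExt hf hfin ht).continuous.measurable

lemma tendsto_oscModulus_of_tendsto_eBMONorm_sub {ι : Type*} {F : Filter ι} [F.NeBot]
    {u : ι → 𝔼 n → ℝ} (hu : ∀ᶠ i in F, UniformContinuous (u i)) (hf : Measurable f)
    (h : Tendsto (fun i => eBMONorm fun x => f x - u i x) F (𝓝 0)) :
    Tendsto (oscModulus f) (𝓝[>] 0) (𝓝 0) := by
  rw [ENNReal.tendsto_nhds_zero]
  intro ε hε
  have hε₂ : 0 < ε / 2 := ENNReal.half_pos hε.ne'
  obtain ⟨i, hui, hi⟩ := (hu.and (ENNReal.tendsto_nhds_zero.1 h _ hε₂)).exists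
  filter_upwards [ENNReal.tendsto_nhds_zero.1 (tendsto_oscModulus_of_uniformContinuous hui) _ hε₂]
    with δ hδ
  calc oscModulus f δ ≤ oscModulus (fun x => f x - u i x) δ + oscModulus (u i) δ :=
        oscModulus_le_add (hf.sub hui.continuous.measurable) δ
    _ ≤ ε / 2 + ε / 2 := add_le_add ((oscModulus_le_eBMONorm _ δ).trans hi) hδ
    _ = ε := ENNReal.add_halves ε

lemma tendsto_oscModulus_iff_tendsto_eBMONorm (hf : Measurable f) (hfin : eBMONorm f ≠ ∞) :
    Tendsto (oscModulus f) (𝓝[>] 0) (𝓝 0) ↔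
      Tendsto (fun t => eBMONorm fun x => f x - poissonExt f x t) (𝓝[>] 0) (𝓝 0) :=
  ⟨tendsto_eBMONorm_sub_poissonExt hf hfin, tendsto_oscModulus_of_tendsto_eBMONorm_sub
    (eventually_mem_nhdsWithin.mono fun _ => uniformContinuous_poissonExt hf hfin) hf⟩

lemma tendsto_bmoNorm_sub_poissonExt_iff (hf : Measurable f) (hfin : eBMONorm f ≠ ∞) :
    Tendsto (fun t => bmoNorm fun x => f x - poissonExt f x t) (𝓝[>] 0) (𝓝 0) ↔
      Tendsto (fun t => eBMONorm fun x => f x - poissonExt f x t) (𝓝[>] 0) (𝓝 0) := by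
  refine tendsto_bmoNorm_iff ?_ ?_ <;> filter_upwards [self_mem_nhdsWithin] with t ht
  · exact measurable_sub_poissonExt hf hfin ht
  · exact ne_top_of_le_ne_top (by finiteness) (eBMONorm_sub_poissonExt_le_two_mul hf hfin ht)

lemma cubeOsc_congr_ae (h : f =ᵐ[volume] g) : cubeOsc f = cubeOsc g := by
  ext c l
  have hQ : f =ᵐ[volume.restrict (cube c l)] g := ae_restrict_of_ae h
  have havg : cubeAvg f c l = cubeAvg g c l := by rw [cubeAvg, cubeAvg, integral_congr_ae hQ]
  rw [cubeOsc, cubeOsc, havg, integral_congr_ae (hQ.mono fun x hx => by rw [hx])]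

lemma bmoNorm_congr_ae (h : f =ᵐ[volume] g) : bmoNorm f = bmoNorm g := by
  rw [bmoNorm, bmoNorm, cubeOsc_congr_ae h]

lemma IsBMO.congr_ae (hf : IsBMO f) (h : f =ᵐ[volume] g) : IsBMO g :=
  ⟨hf.1.congr h, cubeOsc_congr_ae h ▸ hf.2⟩

lemma isVMO_congr_ae (h : f =ᵐ[volume] g) : IsVMO f ↔ IsVMO g := by
  rw [IsVMO, IsVMO, cubeOsc_congr_ae h]
  exact and_congr_left fun _ => ⟨(·.congr_ae h), (·.congr_ae h.symm)⟩

lemma poissonExt_congr_ae (h : f =ᵐ[volume] g) : poissonExt f = poissonExt g := by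
  ext x t
  exact integral_congr_ae (h.mono fun y hy => by simp only [hy])

end VanishingMeanOscillation

end

/-- For `φ ∈ BMO(ℝⁿ)`: `φ ∈ VMO(ℝⁿ)` iff `‖φ - φ(·,t)‖_* → 0` as `t → 0⁺`, where
`φ(x,t)` is the Poisson extension of `φ`. -/
theorem vmo_iff_poisson_approx {n : ℕ} (φ : EuclideanSpace ℝ (Fin n) → ℝ) (hφ : IsBMO φ) :
    IsVMO φ ↔
      Tendsto (fun t : ℝ => bmoNorm (fun x => φ x - poissonExt φ x t))
        (nhdsWithin 0 (Set.Ioi 0)) (nhds 0) := by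
  obtain ⟨f, hf, hφf⟩ := hφ.1.aestronglyMeasurable
  have hBMO : IsBMO f := hφ.congr_ae hφf
  have hfin := hBMO.eBMONorm_ne_top hf.measurable
  have hnorm : ∀ t, bmoNorm (fun x => φ x - poissonExt φ x t) =
      bmoNorm (fun x => f x - poissonExt f x t) := fun t => by
    rw [poissonExt_congr_ae hφf]
    exact bmoNorm_congr_ae (hφf.sub .rfl)
  simp_rw [hnorm]
  rw [isVMO_congr_ae hφf, isVMO_iff_tendsto_oscModulus hBMO hf.measurable,
    tendsto_oscModulus_iff_tendsto_eBMONorm hf.measurable hfin,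
    tendsto_bmoNorm_sub_poissonExt_iff hf.measurable hfin]
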